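/- arXiv:2602.15168 — 4 statements merged into one kernel-verified Lean document; each statement's English description precedes it below -/
import Mathlib

section
/- Let G be a finite group, H a normal subgroup of G, and φ : H → ℂˣ a group homomorphism whose kernel contains the commutator subgroup ⁅H, G⁆. Then there exists an irreducible finite-dimensional complex representation α of G having scalar character φ on H, i.e., satisfying α(h) = φ(h)·id for all h ∈ H. -/
open scoped TensorProduct

/-- A representation is irreducible: the space is nontrivial and the only invariant
subspaces are `⊥` and `⊤`. -/
def IsIrrep {G : Type*} [Group G] {V : Type*} [AddCommGroup V] [Module ℂ V]
    (ρ : Representation ℂ G V) : Prop :=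
  Nontrivial V ∧
    ∀ p : Submodule ℂ V, (∀ g : G, ∀ v ∈ p, ρ g v ∈ p) → p = ⊥ ∨ p = ⊤

/-- `ρ` has scalar character `φ` on the subgroup `H`: every `h ∈ H` acts as the scalar `φ h`. -/
def HasScalarChar {G : Type*} [Group G] {V : Type*} [AddCommGroup V] [Module ℂ V]
    (ρ : Representation ℂ G V) (H : Subgroup G) (φ : H →* ℂˣ) : Prop :=
  ∀ h : H, ρ (h : G) = (φ h : ℂ) • (1 : Module.End ℂ V)

/-- Isomorphism of representations: an equivariant linear equivalence. -/
def RepIso {G : Type*} [Group G] {V W : Type*} [AddCommGroup V] [Module ℂ V]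
    [AddCommGroup W] [Module ℂ W]
    (ρ : Representation ℂ G V) (σ : Representation ℂ G W) : Prop :=
  ∃ e : V ≃ₗ[ℂ] W, ∀ g v, e (ρ g v) = σ g (e v)

/-- `γ` is a constituent of `ρ`: there is an injective equivariant linear map from the
space of `γ` to the space of `ρ`. -/
def IsConstituent {G : Type*} [Group G] {V W : Type*} [AddCommGroup V] [Module ℂ V]
    [AddCommGroup W] [Module ℂ W]
    (γ : Representation ℂ G V) (ρ : Representation ℂ G W) : Prop :=
  ∃ f : V →ₗ[ℂ] W, Function.Injective f ∧ ∀ g v, f (γ g v) = ρ g (f v)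

/-- The right regular representation on functions. -/
def rightReg (G : Type) [Group G] : Representation ℂ G (G → ℂ) where
  toFun g := LinearMap.funLeft ℂ ℂ (fun x => x * g)
  map_one' := by ext; simp [LinearMap.funLeft]
  map_mul' a b := by
    refine LinearMap.ext fun f => funext fun x => ?_
    simp [LinearMap.funLeft_apply, mul_assoc]

theorem rightReg_apply (G : Type) [Group G] (g : G) (f : G → ℂ) (x : G) :
    rightReg G g f x = f (x * g) := rfl

/-- The induced space. -/
def indSpace {G : Type} [Group G] (H : Subgroup G) (φ : H →* ℂˣ) : Submodule ℂ (G → ℂ) where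
  carrier := {f | ∀ (h : H) (x : G), f ((h : G) * x) = (φ h : ℂ) * f x}
  zero_mem' := by intro h x; simp
  add_mem' := by
    intro a b ha hb h x
    simp only [Pi.add_apply, ha h x, hb h x]; ring
  smul_mem' := by
    intro c a ha h x
    simp only [Pi.smul_apply, ha h x, smul_eq_mul]; ring

/-- Restriction of a representation to an invariant subspace. -/
def subRep {G V : Type} [Group G] [AddCommGroup V] [Module ℂ V] (ρ : Representation ℂ G V)
    (p : Submodule ℂ V) (hp : ∀ g : G, ∀ v ∈ p, ρ g v ∈ p) : Representation ℂ G p where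
  toFun g := (ρ g).restrict (hp g)
  map_one' := by ext; simp
  map_mul' a b := by ext; simp

theorem indSpace_ne_bot {G : Type} [Group G] (H : Subgroup G) (φ : H →* ℂˣ) :
    indSpace H φ ≠ ⊥ := by
  classical
  intro hb
  let f : G → ℂ := fun x => if hx : x ∈ H then (φ ⟨x, hx⟩ : ℂ) else 0
  have hf : f ∈ indSpace H φ := by
    intro h x
    by_cases hx : x ∈ H
    · have h2 : (h : G) * x ∈ H := H.mul_mem h.2 hx
      have h3 : (⟨(h : G) * x, h2⟩ : H) = h * ⟨x, hx⟩ := rfl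
      simp only [f, dif_pos hx, dif_pos h2, h3, map_mul, Units.val_mul]
    · have h2 : (h : G) * x ∉ H := fun h2 => hx ((H.mul_mem_cancel_left h.2).1 h2)
      simp only [f, dif_neg hx, dif_neg h2, mul_zero]
  rw [hb, Submodule.mem_bot] at hf
  have h1 := congrFun hf 1
  simp only [f, dif_pos H.one_mem, Pi.zero_apply] at h1
  exact Units.ne_zero _ h1

/-- for a finite group `G`, a normal subgroup `H`, and a homomorphism
`φ : H → ℂˣ` trivial on `⁅H, G⁆`, there exists an irreducible finite-dimensional complex
representation of `G` with scalar character `φ` on `H`. -/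
theorem exists_irrep_with_scalar_char
    (G : Type) [Group G] [Finite G] (H : Subgroup G) (hH : H.Normal)
    (φ : H →* ℂˣ)
    (hker : ∀ h : H, (h : G) ∈ ⁅H, (⊤ : Subgroup G)⁆ → φ h = 1) :
    ∃ α : FDRep ℂ G, IsIrrep α.ρ ∧ HasScalarChar α.ρ H φ := by
  classical
  have key : ∀ (h : H), ∀ f ∈ indSpace H φ, rightReg G (h : G) f = (φ h : ℂ) • f := by
    intro h f hf
    funext x
    have hc : x * h * x⁻¹ ∈ H := hH.conj_mem h h.2 x
    have e1 : φ ⟨x * h * x⁻¹, hc⟩ = φ h := by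
      have hm : ((h⁻¹ * ⟨x * h * x⁻¹, hc⟩ : H) : G) ∈ ⁅H, (⊤ : Subgroup G)⁆ := by
        have := Subgroup.commutator_mem_commutator (H.inv_mem h.2) (Subgroup.mem_top x)
        simpa [commutatorElement_def, mul_assoc] using this
      have := hker _ hm
      rw [map_mul, map_inv, inv_mul_eq_one] at this
      exact this.symm
    have h2 := hf ⟨x * h * x⁻¹, hc⟩ x
    rw [e1] at h2
    rw [rightReg_apply, Pi.smul_apply, smul_eq_mul, ← h2]
    simp
  have hinv : ∀ g : G, ∀ f ∈ indSpace H φ, rightReg G g f ∈ indSpace H φ := by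
    intro g f hf h x
    rw [rightReg_apply, rightReg_apply, mul_assoc]
    exact hf h _
  let S : Set (Submodule ℂ (G → ℂ)) :=
    {p | p ≠ ⊥ ∧ p ≤ indSpace H φ ∧ ∀ g : G, ∀ v ∈ p, rightReg G g v ∈ p}
  obtain ⟨p, ⟨hp0, hpW, hpi⟩, hmin⟩ :=
    (wellFounded_lt (α := Submodule ℂ (G → ℂ))).has_min S
      ⟨indSpace H φ, indSpace_ne_bot H φ, le_rfl, hinv⟩
  refine ⟨FDRep.of (subRep (rightReg G) p hpi), ?_, ?_⟩
  · change IsIrrep (subRep (rightReg G) p hpi)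
    refine ⟨Submodule.nontrivial_iff_ne_bot.2 hp0, fun q hq => ?_⟩
    by_cases hq0 : q = ⊥
    · exact Or.inl hq0
    right
    have hle : q.map p.subtype ≤ p := Submodule.map_subtype_le p q
    have hS : q.map p.subtype ∈ S := by
      refine ⟨?_, hle.trans hpW, ?_⟩
      · intro hb
        exact hq0 (Submodule.map_injective_of_injective p.injective_subtype (by rw [hb, Submodule.map_bot]))
      · rintro g _ ⟨v, hv, rfl⟩
        exact ⟨_, hq g v hv, rfl⟩
    have heq : q.map p.subtype = p := by
      by_contra hne
      exact hmin _ hS (lt_of_le_of_ne hle hne)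
    refine eq_top_iff.2 fun v _ => ?_
    have hv : (v : G → ℂ) ∈ q.map p.subtype := heq.ge v.2
    obtain ⟨w, hw, hwv⟩ := hv
    exact (Subtype.ext hwv : w = v) ▸ hw
  · change HasScalarChar (subRep (rightReg G) p hpi) H φ
    intro h
    refine LinearMap.ext fun v => Subtype.ext ?_
    exact key h v (hpW v.2)
end

section
/- Let G be a finite group, H a normal subgroup of G, and φ : H → ℂˣ a group homomorphism with ⁅H, G⁆ ≤ ker φ. Let (ρ, V) be a finite-dimensional complex representation of G and set V_φ = {v ∈ V : ρ(h)v = φ(h)v for all h ∈ H}. Then V_φ is a G-invariant subspace of V, every irreducible constituent of the subrepresentation V_φ has scalar character φ on H, and V_φ equals the sum of the isotypic components of V corresponding to the irreducible representations of G having scalar character φ on H. -/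
open scoped TensorProduct

/-- The `φ`-eigenspace of the `H`-action: vectors on which every `h ∈ H` acts by `φ h`. -/
def eigSubmodule {G : Type*} [Group G] {V : Type*} [AddCommGroup V] [Module ℂ V]
    (ρ : Representation ℂ G V) (H : Subgroup G) (φ : H →* ℂˣ) : Submodule ℂ V where
  carrier := {v | ∀ h : H, ρ (h : G) v = (φ h : ℂ) • v}
  add_mem' := by
    intro a b ha hb h
    simp [map_add, ha h, hb h, smul_add]
  zero_mem' := by
    intro h
    simp
  smul_mem' := by
    intro c v hv h
    simp only [map_smul, hv h, smul_comm c]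

/-- The restriction of a representation to an invariant submodule. -/
def restrictRep {G : Type*} [Group G] {V : Type*} [AddCommGroup V] [Module ℂ V]
    (ρ : Representation ℂ G V) (p : Submodule ℂ V)
    (hp : ∀ g : G, ∀ v ∈ p, ρ g v ∈ p) : Representation ℂ G p where
  toFun g := (ρ g).restrict (fun v hv => hp g v hv)
  map_one' := by
    ext v
    simp [LinearMap.restrict_apply]
  map_mul' g h := by
    ext v
    simp [LinearMap.restrict_apply]

theorem invariant_le_sSup_irreps {G : Type} [Group G] [Finite G]
    {V : Type} [AddCommGroup V] [Module ℂ V] [FiniteDimensional ℂ V]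
    (ρ : Representation ℂ G V) (n : ℕ) :
    ∀ p : Submodule ℂ V, Module.finrank ℂ p = n → (∀ g : G, ∀ v ∈ p, ρ g v ∈ p) →
      p ≤ sSup {q : Submodule ℂ V | q ≤ p ∧ ∃ hq : ∀ g : G, ∀ v ∈ q, ρ g v ∈ q,
        IsIrrep (restrictRep ρ q hq)} := by
  induction n using Nat.strong_induction_on with
  | _ n ih =>
    intro p hn hp
    by_cases hbot : p = ⊥
    · rw [hbot]; exact bot_le
    by_cases hirr : IsIrrep (restrictRep ρ p hp)
    · exact le_sSup ⟨le_rfl, hp, hirr⟩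
    have hnt : Nontrivial p := Submodule.nontrivial_iff_ne_bot.mpr hbot
    have hex : ∃ r : Submodule ℂ p, (∀ g : G, ∀ v ∈ r, restrictRep ρ p hp g v ∈ r) ∧
        r ≠ ⊥ ∧ r ≠ ⊤ := by
      by_contra hcon
      push Not at hcon
      refine hirr ⟨hnt, fun r hr => ?_⟩
      by_cases h0 : r = ⊥
      · exact Or.inl h0
      · exact Or.inr (hcon r hr h0)
    obtain ⟨r, hr, hr0, hr1⟩ := hex
    have hqp : r.map p.subtype ≤ p := Submodule.map_subtype_le p r
    have hqinv : ∀ g : G, ∀ v ∈ r.map p.subtype, ρ g v ∈ r.map p.subtype := by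
      rintro g _ ⟨w, hw, rfl⟩
      exact ⟨restrictRep ρ p hp g w, hr g w hw, rfl⟩
    have hq0 : r.map p.subtype ≠ ⊥ := by
      intro h
      apply hr0
      apply Submodule.map_injective_of_injective p.injective_subtype
      rw [h, Submodule.map_bot]
    have hq1 : r.map p.subtype ≠ p := by
      intro h
      apply hr1
      apply Submodule.map_injective_of_injective p.injective_subtype
      rw [h, Submodule.map_subtype_top]
    generalize r.map p.subtype = q at hqp hqinv hq0 hq1
    have : NeZero (Nat.card G : ℂ) := ⟨by exact_mod_cast Nat.card_pos.ne'⟩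
    have hss : Representation.IsSemisimpleRepresentation ρ := by
      rw [Representation.isSemisimpleRepresentation_iff_isSemisimpleModule_asModule]
      infer_instance
    obtain ⟨c, hc⟩ := hss.exists_isCompl (⟨q, fun g v hv => hqinv g v hv⟩ : Subrepresentation ρ)
    have hsup : q ⊔ c.toSubmodule = ⊤ :=
      congrArg Subrepresentation.toSubmodule hc.sup_eq_top
    have hinf : q ⊓ c.toSubmodule = ⊥ :=
      congrArg Subrepresentation.toSubmodule hc.inf_eq_bot
    have hcp : c.toSubmodule ⊓ p < p := by
      refine lt_of_le_of_ne inf_le_right fun h => hq0 ?_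
      have h1 : p ≤ c.toSubmodule := inf_eq_right.mp h
      rw [← hinf]
      exact (inf_eq_left.mpr (hqp.trans h1)).symm
    have hdec : p = q ⊔ (c.toSubmodule ⊓ p) := by
      rw [← sup_inf_assoc_of_le _ hqp, hsup, top_inf_eq]
    have hqlt : q < p := lt_of_le_of_ne hqp hq1
    have key : ∀ s : Submodule ℂ V, s < p → (∀ g : G, ∀ v ∈ s, ρ g v ∈ s) →
        s ≤ sSup {q : Submodule ℂ V | q ≤ p ∧ ∃ hq : ∀ g : G, ∀ v ∈ q, ρ g v ∈ q,
          IsIrrep (restrictRep ρ q hq)} := by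
      intro s hs hsinv
      refine (ih _ (hn ▸ Submodule.finrank_lt_finrank_of_lt hs) s rfl hsinv).trans ?_
      exact sSup_le_sSup fun t ht => ⟨ht.1.trans hs.le, ht.2⟩
    calc p = q ⊔ (c.toSubmodule ⊓ p) := hdec
      _ ≤ _ := sup_le (key q hqlt hqinv) (key _ hcp fun g v hv =>
        ⟨c.apply_mem_toSubmodule g hv.1, hp g v hv.2⟩)

/-- for `H ⊴ G` and `φ : H → ℂˣ` trivial on `⁅H,G⁆`, the subspace
`V_φ = {v | ρ(h)v = φ(h)v ∀ h ∈ H}` is `G`-invariant, every irreducible constituent of the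
subrepresentation on `V_φ` has scalar character `φ` on `H`, and `V_φ` is the sum of all
irreducible subrepresentations of `V` with scalar character `φ` on `H` (i.e. of the
corresponding isotypic components). -/
theorem eigSubmodule_invariant_and_isotypic
    (G : Type) [Group G] [Finite G] (H : Subgroup G) (hH : H.Normal)
    (φ : H →* ℂˣ)
    (hker : ∀ h : H, (h : G) ∈ ⁅H, (⊤ : Subgroup G)⁆ → φ h = 1)
    {V : Type} [AddCommGroup V] [Module ℂ V] [FiniteDimensional ℂ V]
    (ρ : Representation ℂ G V) :
    (∀ g : G, ∀ v ∈ eigSubmodule ρ H φ, ρ g v ∈ eigSubmodule ρ H φ) ∧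
    (∀ (U : Type) [AddCommGroup U] [Module ℂ U] [FiniteDimensional ℂ U]
      (γ : Representation ℂ G U), IsIrrep γ →
      ∀ f : U →ₗ[ℂ] V, Function.Injective f → (∀ g u, f (γ g u) = ρ g (f u)) →
      LinearMap.range f ≤ eigSubmodule ρ H φ → HasScalarChar γ H φ) ∧
    eigSubmodule ρ H φ =
      sSup {p : Submodule ℂ V | ∃ hp : ∀ g : G, ∀ v ∈ p, ρ g v ∈ p,
        IsIrrep (restrictRep ρ p hp) ∧ HasScalarChar (restrictRep ρ p hp) H φ} := by
  have hinv : ∀ g : G, ∀ v ∈ eigSubmodule ρ H φ, ρ g v ∈ eigSubmodule ρ H φ := by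
    intro g v hv h
    have hmem : g⁻¹ * (h : G) * g ∈ H := by simpa using hH.conj_mem h h.2 g⁻¹
    have hφ : φ ⟨g⁻¹ * (h : G) * g, hmem⟩ = φ h := by
      have h1 : φ (h * (⟨g⁻¹ * (h : G) * g, hmem⟩ : H)⁻¹) = 1 := by
        apply hker
        have := Subgroup.commutator_mem_commutator h.2 (Subgroup.mem_top g⁻¹)
        simpa [commutatorElement_def, mul_assoc] using this
      rw [map_mul, map_inv, mul_inv_eq_one] at h1
      exact h1.symm
    have h2 := hv ⟨g⁻¹ * (h : G) * g, hmem⟩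
    rw [hφ] at h2
    have h3 : (h : G) * g = g * (g⁻¹ * (h : G) * g) := by group
    rw [← Module.End.mul_apply, ← map_mul, h3, map_mul, Module.End.mul_apply, h2, map_smul]
  refine ⟨hinv, ?_, ?_⟩
  · intro U _ _ _ γ _ f hf hfe hr h
    ext u
    apply hf
    rw [hfe, hr ⟨u, rfl⟩ h]
    simp
  · apply le_antisymm
    · refine (invariant_le_sSup_irreps ρ _ _ rfl hinv).trans (sSup_le_sSup ?_)
      rintro q ⟨hle, hq, hirr⟩
      refine ⟨hq, hirr, fun h => ?_⟩
      ext u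
      exact hle u.2 h
    · refine sSup_le ?_
      rintro q ⟨hq, -, hsc⟩ v hv h
      have := congrArg Subtype.val (LinearMap.congr_fun (hsc h) ⟨v, hv⟩)
      exact this
end

section
/- Let G be a finite group, let U be the left regular representation of G on ℂ[G] (U_g |h⟩ = |g·h⟩), and for each one-dimensional character χ_α : G → ℂˣ define Z^α = Σ_{h∈G} χ_α(h⁻¹) |h⟩⟨h|, and for each g ∈ G define X_g = Σ_{h∈G} |h·g⟩⟨h|. Let |GHZ_n⟩ = (1/√|G|) Σ_{g∈G} |g⟩^{⊗n} and define |φ_{α, g₂,…,g_n}⟩ = (Z^α ⊗ X_{g₂} ⊗ ⋯ ⊗ X_{g_n}) |GHZ_n⟩. Then: (i) the family {|φ_{α, g₂,…,g_n}⟩}, indexed by one-dimensional characters α of G and elements g₂, …, g_n ∈ G, is orthonormal; and (ii) for every g ∈ G, U_g^{⊗n} |φ_{α, g₂,…,g_n}⟩ = χ_α(g) · |φ_{α, g₂,…,g_n}⟩. -/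
/-- `ℂ[G]^{⊗n}`, realized as the space of functions on `n`-tuples of group elements,
with orthonormal basis the delta functions `|h₁ … h_n⟩`. -/
abbrev TensorPowSpace (G : Type) (n : ℕ) : Type := (Fin n → G) → ℂ

/-- The `n`-th tensor power `U_g^{⊗n}` of the left regular representation:
`U_g^{⊗n} |h₁ … h_n⟩ = |g h₁, …, g h_n⟩`. -/
def Un (G : Type) [Group G] (n : ℕ) (g : G) :
    TensorPowSpace G n →ₗ[ℂ] TensorPowSpace G n where
  toFun f := fun x => f (fun i => g⁻¹ * x i)
  map_add' _ _ := rfl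
  map_smul' _ _ := rfl

/-- The operator `Z^χ ⊗ X_{g 1} ⊗ ⋯ ⊗ X_{g (n-1)}` (with `g 0 = 1`), where
`Z^χ = ∑_h χ(h⁻¹)|h⟩⟨h|` acts on the first factor and `X_a = ∑_h |h·a⟩⟨h|` is the right
regular representation acting on the remaining factors. -/
def ZXop (G : Type) [Group G] (n : ℕ) [NeZero n] (χ : G →* ℂˣ) (g : Fin n → G) :
    TensorPowSpace G n →ₗ[ℂ] TensorPowSpace G n where
  toFun f := fun x => ((χ (x 0)⁻¹ : ℂˣ) : ℂ) * f (fun i => x i * (g i)⁻¹)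
  map_add' f f' := by
    funext x
    simp [mul_add]
  map_smul' c f := by
    funext x
    simp only [Pi.smul_apply, smul_eq_mul, RingHom.id_apply]
    ring

open Classical in
/-- The normalized GHZ state `|GHZ_n⟩ = |G|^{-1/2} ∑_g |g⟩^{⊗n}`. -/
noncomputable def GHZvec (G : Type) [Group G] [Fintype G] (n : ℕ) [NeZero n] :
    TensorPowSpace G n :=
  fun x => if ∀ i, x i = x 0 then ((Real.sqrt (Fintype.card G) : ℝ) : ℂ)⁻¹ else 0

/-- The state `|φ_{χ,g}⟩ = (Z^χ ⊗ X_{g 1} ⊗ ⋯ ⊗ X_{g (n-1)}) |GHZ_n⟩`. -/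
noncomputable def phiVec (G : Type) [Group G] [Fintype G] (n : ℕ) [NeZero n]
    (χ : G →* ℂˣ) (g : Fin n → G) : TensorPowSpace G n :=
  ZXop G n χ g (GHZvec G n)

/-- The inner product on `ℂ[G]^{⊗n}` for which the delta functions form an orthonormal
basis. -/
noncomputable def hsInner (G : Type) [Fintype G] (n : ℕ) (f f' : TensorPowSpace G n) : ℂ :=
  ∑ x : Fin n → G, (starRingEnd ℂ) (f x) * f' x

open Classical in
lemma phiVec_apply (G : Type) [Group G] [Fintype G] (n : ℕ) [NeZero n]
    (χ : G →* ℂˣ) (g : Fin n → G) (hg : g 0 = 1) (x : Fin n → G) :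
    phiVec G n χ g x = if x = (fun i => x 0 * g i) then
      ((χ (x 0)⁻¹ : ℂˣ) : ℂ) * ((Real.sqrt (Fintype.card G) : ℝ) : ℂ)⁻¹ else 0 := by
  have h : (∀ i, x i * (g i)⁻¹ = x 0 * (g 0)⁻¹) ↔ x = (fun i => x 0 * g i) := by
    rw [funext_iff]
    simp [hg, mul_inv_eq_iff_eq_mul]
  simp only [phiVec, ZXop, GHZvec, LinearMap.coe_mk, AddHom.coe_mk, h, mul_ite, mul_zero]

lemma char_conj (G : Type) [Group G] [Fintype G] (χ : G →* ℂˣ) (h : G) :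
    (starRingEnd ℂ) ((χ h⁻¹ : ℂˣ) : ℂ) = ((χ h : ℂˣ) : ℂ) := by
  have h1 : ((χ h : ℂˣ) : ℂ) ^ Fintype.card G = 1 := by
    rw [← Units.val_pow_eq_pow_val, ← map_pow, pow_card_eq_one, map_one, Units.val_one]
  have h2 : ‖((χ h : ℂˣ) : ℂ)‖ = 1 := Complex.norm_eq_one_of_pow_eq_one h1 Fintype.card_ne_zero
  rw [map_inv, Units.val_inv_eq_inv_val, Complex.inv_eq_conj h2, Complex.conj_conj]

open Classical in
lemma char_sum (G : Type) [Group G] [Fintype G] (χ χ' : G →* ℂˣ) :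
    ∑ h : G, ((χ h : ℂˣ) : ℂ) * ((χ' h⁻¹ : ℂˣ) : ℂ)
      = if χ = χ' then (Fintype.card G : ℂ) else 0 := by
  have := sum_hom_units ((Units.coeHom ℂ).comp (χ / χ'))
  have e : (Units.coeHom ℂ).comp (χ / χ') = 1 ↔ χ = χ' := by
    rw [← div_eq_one (a := χ)]
    constructor
    · intro h
      ext x
      simpa using DFunLike.congr_fun h x
    · intro h
      rw [h]
      rfl
  simp only [e] at this
  push_cast at this
  rw [← this]
  refine Finset.sum_congr rfl fun h _ => ?_
  simp [div_eq_mul_inv]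

open Classical in
/-- the family `|φ_{χ,g}⟩ = (Z^χ ⊗ X_{g₂} ⊗ ⋯ ⊗ X_{g_n})|GHZ_n⟩`, indexed by
one-dimensional characters `χ` of `G` and tuples `g` (normalized by `g 0 = 1`), is
orthonormal, and each `|φ_{χ,g}⟩` satisfies `U_a^{⊗n} |φ_{χ,g}⟩ = χ(a)·|φ_{χ,g}⟩`. -/
theorem phiVec_orthonormal_and_symmetric
    (G : Type) [Group G] [Fintype G] (n : ℕ) [NeZero n]
    (χ χ' : G →* ℂˣ) (g g' : Fin n → G) (hg : g 0 = 1) (hg' : g' 0 = 1) :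
    (hsInner G n (phiVec G n χ g) (phiVec G n χ' g')
      = if χ = χ' ∧ g = g' then 1 else 0) ∧
    (∀ a : G, Un G n a (phiVec G n χ g) = ((χ a : ℂˣ) : ℂ) • phiVec G n χ g) := by
  refine ⟨?_, ?_⟩
  · unfold hsInner
    have hc : (((Real.sqrt (Fintype.card G) : ℝ) : ℂ)⁻¹ * ((Real.sqrt (Fintype.card G) : ℝ) : ℂ)⁻¹)
        = (Fintype.card G : ℂ)⁻¹ := by
      rw [← mul_inv, ← Complex.ofReal_mul, Real.mul_self_sqrt (Nat.cast_nonneg _)]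
      simp
    by_cases hgg : g = g'
    · subst hgg
      have hinj : Function.Injective (fun (h : G) (i : Fin n) => h * g i) := by
        intro a b hab
        simpa using congrFun hab 0
      rw [← Fintype.sum_of_injective _ hinj
        (fun h => (((χ h : ℂˣ) : ℂ) * ((χ' h⁻¹ : ℂˣ) : ℂ)) * (Fintype.card G : ℂ)⁻¹)]
      · rw [← Finset.sum_mul, char_sum]
        by_cases hχ : χ = χ'
        · simp [hχ]
        · simp [hχ]
      · intro x hx
        rw [phiVec_apply G n χ g hg, if_neg]
        · simp
        · intro h
          exact hx ⟨x 0, h.symm⟩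
      · intro h
        rw [phiVec_apply G n χ g hg, phiVec_apply G n χ' g hg]
        simp only [hg, mul_one, if_true]
        rw [map_mul, char_conj, ← hc, map_inv₀, Complex.conj_ofReal]
        ring
    · rw [if_neg (fun h => hgg h.2)]
      refine Finset.sum_eq_zero fun x _ => ?_
      rw [phiVec_apply G n χ g hg, phiVec_apply G n χ' g' hg']
      by_cases h1 : x = (fun i => x 0 * g i)
      · rw [if_neg (c := x = (fun i => x 0 * g' i)), mul_zero]
        intro h2
        apply hgg
        funext i
        exact mul_left_cancel ((congrFun h1 i).symm.trans (congrFun h2 i))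
      · rw [if_neg h1, map_zero, zero_mul]
  · intro a
    funext x
    change phiVec G n χ g (fun i => a⁻¹ * x i) = ((χ a : ℂˣ) : ℂ) * phiVec G n χ g x
    rw [phiVec_apply G n χ g hg, phiVec_apply G n χ g hg]
    have e : ((fun i => a⁻¹ * x i) = fun i => a⁻¹ * x 0 * g i) ↔ x = (fun i => x 0 * g i) := by
      simp only [funext_iff, mul_assoc, mul_right_inj]
    simp only [e]
    split_ifs
    · simp
      ring
    · simp
end

section
/- Let G be a finite group, let U be the left regular representation of G on ℂ[G] (U_g |h⟩ = |g·h⟩), and let χ : G → ℂˣ be a one-dimensional character of G. Then for every n ≥ 1, the eigenspace {v ∈ (ℂ[G])^{⊗n} : U_g^{⊗n} v = χ(g)·v for all g ∈ G} has dimension |G|^{n−1}. Consequently, for fixed χ = χ_α, the |G|^{n−1} orthonormal vectors |φ_{α, g₂,…,g_n}⟩ = (Z^α ⊗ X_{g₂} ⊗ ⋯ ⊗ X_{g_n}) |GHZ_n⟩, with g₂,…,g_n ∈ G, form an orthonormal basis of this eigenspace. -/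
/-- The `χ`-eigenspace (the `χ`-symmetric subspace) of `U^{⊗n}`. -/
noncomputable def chiEigenspace (G : Type) [Group G] (n : ℕ) (χ : G →* ℂˣ) :
    Submodule ℂ (TensorPowSpace G n) where
  carrier := {f | ∀ a : G, Un G n a f = ((χ a : ℂˣ) : ℂ) • f}
  add_mem' := by
    intro f f' hf hf' a
    simp [map_add, hf a, hf' a, smul_add]
  zero_mem' := by
    intro a
    simp
  smul_mem' := by
    intro c f hf a
    simp only [map_smul, hf a]
    rw [smul_comm]

open Classical in
theorem phiVec_apply_eq (G : Type) [Group G] [Fintype G] (n : ℕ) [NeZero n]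
    (χ : G →* ℂˣ) (g : Fin n → G) (hg : g 0 = 1) (x : Fin n → G) :
    phiVec G n χ g x = if g = (fun i => (x 0)⁻¹ * x i) then
      ((χ (x 0)⁻¹ : ℂˣ) : ℂ) * ((Real.sqrt (Fintype.card G) : ℝ) : ℂ)⁻¹ else 0 := by
  have h : (∀ i, x i * (g i)⁻¹ = x 0 * (g 0)⁻¹) ↔ g = (fun i => (x 0)⁻¹ * x i) := by
    rw [funext_iff]
    refine forall_congr' fun i => ?_
    rw [hg, inv_one, mul_one, mul_inv_eq_iff_eq_mul, eq_inv_mul_iff_mul_eq, eq_comm]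
  simp only [phiVec, ZXop, GHZvec, LinearMap.coe_mk, AddHom.coe_mk, h, mul_ite, mul_zero]

theorem sqrt_card_ne_zero (G : Type) [Group G] [Fintype G] :
    ((Real.sqrt (Fintype.card G) : ℝ) : ℂ) ≠ 0 := by
  have : (0 : ℝ) < Fintype.card G := by exact_mod_cast Fintype.card_pos
  exact_mod_cast (Real.sqrt_pos.mpr this).ne'

theorem char_conj_mul (G : Type) [Group G] [Fintype G] (χ : G →* ℂˣ) (a : G) :
    (starRingEnd ℂ) ((χ a : ℂˣ) : ℂ) * ((χ a : ℂˣ) : ℂ) = 1 := by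
  have h : ((χ a : ℂˣ) : ℂ) ^ Fintype.card G = 1 := by
    rw [← Units.val_pow_eq_pow_val, ← map_pow, pow_card_eq_one, map_one, Units.val_one]
  have h1 : ‖((χ a : ℂˣ) : ℂ)‖ = 1 := Complex.norm_eq_one_of_pow_eq_one h Fintype.card_ne_zero
  rw [mul_comm, Complex.mul_conj, Complex.normSq_eq_norm_sq, h1]
  simp

theorem phiVec_mem (G : Type) [Group G] [Fintype G] (n : ℕ) [NeZero n]
    (χ : G →* ℂˣ) (g : Fin n → G) (hg : g 0 = 1) :
    phiVec G n χ g ∈ chiEigenspace G n χ := by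
  intro a
  funext x
  change phiVec G n χ g (fun i => a⁻¹ * x i) = ((χ a : ℂˣ) : ℂ) * phiVec G n χ g x
  rw [phiVec_apply_eq G n χ g hg, phiVec_apply_eq G n χ g hg]
  have h : (fun i => (a⁻¹ * x 0)⁻¹ * (a⁻¹ * x i)) = (fun i => (x 0)⁻¹ * x i) := by
    funext i; group
  rw [h]
  split_ifs
  · rw [mul_inv_rev, inv_inv, map_mul, Units.val_mul]; ring
  · simp

open Classical in
theorem phiVec_inner (G : Type) [Group G] [Fintype G] (n : ℕ) [NeZero n]
    (χ : G →* ℂˣ) (g g' : Fin n → G) (hg : g 0 = 1) (hg' : g' 0 = 1) :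
    hsInner G n (phiVec G n χ g) (phiVec G n χ g') = if g = g' then 1 else 0 := by
  unfold hsInner
  simp only [phiVec_apply_eq G n χ g hg, phiVec_apply_eq G n χ g' hg']
  split_ifs with h
  · subst h
    have hc := sqrt_card_ne_zero G
    have hs : ((Real.sqrt (Fintype.card G) : ℝ) : ℂ) * ((Real.sqrt (Fintype.card G) : ℝ) : ℂ)
        = Fintype.card G := by
      rw [← Complex.ofReal_mul, Real.mul_self_sqrt (Nat.cast_nonneg _)]; simp
    have hG : (Fintype.card G : ℂ) ≠ 0 := by exact_mod_cast Fintype.card_ne_zero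
    have key : ∀ x : Fin n → G,
        (starRingEnd ℂ) (if g = (fun i => (x 0)⁻¹ * x i) then
          ((χ (x 0)⁻¹ : ℂˣ) : ℂ) * ((Real.sqrt (Fintype.card G) : ℝ) : ℂ)⁻¹ else 0) *
        (if g = (fun i => (x 0)⁻¹ * x i) then
          ((χ (x 0)⁻¹ : ℂˣ) : ℂ) * ((Real.sqrt (Fintype.card G) : ℝ) : ℂ)⁻¹ else 0)
        = ∑ h : G, if x = (fun i => h * g i) then (Fintype.card G : ℂ)⁻¹ else 0 := by
      intro x
      have e : ∀ h : G, (x = fun i => h * g i) ↔ (h = x 0 ∧ g = (fun i => (x 0)⁻¹ * x i)) := by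
        intro h
        constructor
        · intro hx
          have h0 : x 0 = h := by rw [hx]; simp [hg]
          refine ⟨h0.symm, ?_⟩
          funext i
          rw [h0, hx]; simp
        · rintro ⟨rfl, h2⟩
          funext i
          rw [h2]; simp
      simp only [e]
      split_ifs with h1
      · rw [map_mul, mul_mul_mul_comm, char_conj_mul, map_inv₀, Complex.conj_ofReal,
          ← mul_inv, hs]
        simp [h1]
      · simp [h1]
    rw [Finset.sum_congr rfl fun x _ => key x, Finset.sum_comm]
    simp [hG]
  · refine Finset.sum_eq_zero fun x _ => ?_
    by_cases h1 : g = (fun i => (x 0)⁻¹ * x i)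
    · rw [if_neg (c := g' = _) (fun h2 => h (h1.trans h2.symm)), mul_zero]
    · rw [if_neg h1]; simp

theorem card_pinned (G : Type) [Group G] [Fintype G] (n : ℕ) [NeZero n] :
    Nat.card {g : Fin n → G // g 0 = 1} = Fintype.card G ^ (n - 1) := by
  obtain ⟨m, rfl⟩ : ∃ m, n = m + 1 := ⟨n - 1, by have := NeZero.pos n; omega⟩
  have e : {g : Fin (m + 1) → G // g 0 = 1} ≃ (Fin m → G) :=
    { toFun := fun g => Fin.tail g.1
      invFun := fun f => ⟨Fin.cons 1 f, by exact Fin.cons_zero _ _⟩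
      left_inv := by
        rintro ⟨g, hg⟩
        apply Subtype.ext
        change Fin.cons 1 (Fin.tail g) = g
        have hg0 : g 0 = 1 := hg
        rw [← hg0]
        exact Fin.cons_self_tail g
      right_inv := fun f => Fin.tail_cons _ _ }
  rw [Nat.card_congr e]
  simp

theorem phiVec_comb (G : Type) [Group G] [Fintype G] (n : ℕ) [NeZero n] (χ : G →* ℂˣ)
    [Fintype {g : Fin n → G // g 0 = 1}]
    (a : {g : Fin n → G // g 0 = 1} → ℂ) (x : Fin n → G) :
    (∑ g, a g • phiVec G n χ g.1) x =
      a ⟨fun i => (x 0)⁻¹ * x i, by simp⟩ *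
        (((χ (x 0)⁻¹ : ℂˣ) : ℂ) * ((Real.sqrt (Fintype.card G) : ℝ) : ℂ)⁻¹) := by
  classical
  rw [Finset.sum_apply, Finset.sum_eq_single ⟨fun i => (x 0)⁻¹ * x i, by simp⟩]
  · rw [Pi.smul_apply, phiVec_apply_eq _ _ _ _ (by simp), if_pos rfl, smul_eq_mul]
  · intro g _ hne
    rw [Pi.smul_apply, phiVec_apply_eq _ _ _ _ g.2,
      if_neg (fun h => hne (Subtype.ext h)), smul_zero]
  · simp

theorem phiVec_span (G : Type) [Group G] [Fintype G] (n : ℕ) [NeZero n] (χ : G →* ℂˣ) :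
    chiEigenspace G n χ =
      Submodule.span ℂ (Set.range fun g : {g : Fin n → G // g 0 = 1} =>
        phiVec G n χ g.1) := by
  classical
  apply le_antisymm
  · intro f hf
    have : f = ∑ g : {g : Fin n → G // g 0 = 1},
        (f g.1 * ((Real.sqrt (Fintype.card G) : ℝ) : ℂ)) • phiVec G n χ g.1 := by
      funext x
      rw [phiVec_comb G n χ
        (fun g => f g.1 * ((Real.sqrt (Fintype.card G) : ℝ) : ℂ)) x]
      have h1 : f (fun i => (x 0)⁻¹ * x i) = ((χ (x 0) : ℂˣ) : ℂ) * f x :=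
        congrFun (hf (x 0)) x
      have hc := sqrt_card_ne_zero G
      have h2 : ((χ (x 0) : ℂˣ) : ℂ) ≠ 0 := Units.ne_zero _
      simp only [h1, map_inv, Units.val_inv_eq_inv_val]
      field_simp
    rw [this]
    exact Submodule.sum_mem _ fun g _ =>
      Submodule.smul_mem _ _ (Submodule.subset_span ⟨g, rfl⟩)
  · rw [Submodule.span_le]
    rintro _ ⟨g, rfl⟩
    exact phiVec_mem G n χ g.1 g.2

theorem phiVec_linInd (G : Type) [Group G] [Fintype G] (n : ℕ) [NeZero n] (χ : G →* ℂˣ) :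
    LinearIndependent ℂ (fun g : {g : Fin n → G // g 0 = 1} => phiVec G n χ g.1) := by
  classical
  rw [Fintype.linearIndependent_iff]
  intro a ha g
  have h := congrFun ha g.1
  rw [phiVec_comb G n χ a g.1] at h
  have e : (⟨fun i => (g.1 0)⁻¹ * g.1 i, by simp⟩ : {g : Fin n → G // g 0 = 1}) = g := by
    apply Subtype.ext; funext i; simp [g.2]
  rw [e] at h
  exact (mul_eq_zero.mp h).resolve_right
    (mul_ne_zero (Units.ne_zero _) (inv_ne_zero (sqrt_card_ne_zero G)))

open Classical in
/-- for every `n ≥ 1` and one-dimensional character `χ` of the finite group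
`G`, the eigenspace `{v : U_g^{⊗n} v = χ(g) v ∀ g}` has dimension `|G|^{n-1}`, and the
`|G|^{n-1}` orthonormal vectors `|φ_{χ,g}⟩` (with `g 0 = 1`) form an orthonormal basis of
it: they lie in the eigenspace, are orthonormal, and span it. -/
theorem chiEigenspace_dim_and_basis
    (G : Type) [Group G] [Fintype G] (n : ℕ) [NeZero n] (χ : G →* ℂˣ) :
    Module.finrank ℂ (chiEigenspace G n χ) = Fintype.card G ^ (n - 1) ∧
    (∀ g : Fin n → G, g 0 = 1 → phiVec G n χ g ∈ chiEigenspace G n χ) ∧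
    (∀ g g' : Fin n → G, g 0 = 1 → g' 0 = 1 →
      hsInner G n (phiVec G n χ g) (phiVec G n χ g') = if g = g' then 1 else 0) ∧
    chiEigenspace G n χ =
      Submodule.span ℂ (Set.range fun g : {g : Fin n → G // g 0 = 1} =>
        phiVec G n χ g.1) := by
  refine ⟨?_, fun g hg => phiVec_mem G n χ g hg,
    fun g g' hg hg' => phiVec_inner G n χ g g' hg hg', phiVec_span G n χ⟩
  rw [phiVec_span, finrank_span_eq_card (phiVec_linInd G n χ), ← card_pinned G n,
    Nat.card_eq_fintype_card]
end
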